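/- Let Ω ⊆ ℂ be a domain, let p ∈ Ω, and let f be holomorphic on Ω \ {p} with a pole at p, i.e. there exist an integer n ≥ 1 and a holomorphic non-vanishing function h on a neighborhood of p such that 1/f(z) = (z − p)^n · h(z) near p. Then there exists an open neighborhood U of p, with U ⊆ Ω, such that for every subset A ⊆ U \ {p} one has dim_N A = dim_N f(A) (with the Euclidean metric on both A and f(A)). -/

import Mathlib

open Set Metric

/-- `S` is `D`-bounded with respect to the distance function `d`:
every two points of `S` are at distance at most `D`. -/
def IsBoundedBy {α : Type*} (d : α → α → ℝ) (S : Set α) (D : ℝ) : Prop :=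
  ∀ x ∈ S, ∀ y ∈ S, d x y ≤ D

/-- The Nagata (Assouad–Nagata) dimension of the set `X ⊆ α` with respect to the
distance function `d`, as an element of `ℕ∞`: the infimum of all `n : ℕ` such that
there is a constant `c > 0` so that for every `s > 0` the set `X` admits a cover by
subsets of diameter at most `c * s` such that every subset of `X` of diameter at
most `s` meets at most `n + 1` members of the cover. -/
noncomputable def nagataDimWith {α : Type*} (d : α → α → ℝ) (X : Set α) : ℕ∞ :=
  sInf {N : ℕ∞ | ∃ n : ℕ, N = (n : ℕ∞) ∧ ∃ c : ℝ, 0 < c ∧ ∀ s : ℝ, 0 < s →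
    ∃ B : Set (Set α), (∀ b ∈ B, b ⊆ X) ∧ X ⊆ ⋃₀ B ∧
      (∀ b ∈ B, IsBoundedBy d b (c * s)) ∧
      ∀ T ⊆ X, IsBoundedBy d T s → {b ∈ B | (T ∩ b).Nonempty}.encard ≤ (n : ℕ∞) + 1}

/-- The Nagata dimension of a subset of a metric space. -/
noncomputable def nagataDim {α : Type*} [PseudoMetricSpace α] (X : Set α) : ℕ∞ :=
  nagataDimWith dist X


/-- One step of an `s`-chain of constant colour inside `A`, measured through `F`. -/
def ChainStep {α E : Type*} [PseudoMetricSpace E] (F : α → E) (A : Set α) {n : ℕ}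
    (χ : α → Fin (n + 1)) (s : ℝ) (a b : α) : Prop :=
  a ∈ A ∧ b ∈ A ∧ χ a = χ b ∧ dist (F a) (F b) ≤ s

/-- Coloured version of Nagata dimension at most `n`, for the metric pulled back by `F`. -/
def ColDim {α E : Type*} [PseudoMetricSpace E] (F : α → E) (n : ℕ) (A : Set α) : Prop :=
  ∃ c : ℝ, 0 < c ∧ ∀ s : ℝ, 0 < s → ∃ χ : α → Fin (n + 1), ∀ x y, x ∈ A →
    Relation.ReflTransGen (ChainStep F A χ s) x y → dist (F x) (F y) ≤ c * s

/-- Covering version of Nagata dimension at most `n`. -/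
def CovDim {α : Type*} [PseudoMetricSpace α] (n : ℕ) (X : Set α) : Prop :=
  ∃ c : ℝ, 0 < c ∧ ∀ s : ℝ, 0 < s →
    ∃ B : Set (Set α), (∀ b ∈ B, b ⊆ X) ∧ X ⊆ ⋃₀ B ∧
      (∀ b ∈ B, IsBoundedBy dist b (c * s)) ∧
      ∀ T ⊆ X, IsBoundedBy dist T s → {b ∈ B | (T ∩ b).Nonempty}.encard ≤ (n : ℕ∞) + 1

lemma covDim_of_colDim {α : Type*} [PseudoMetricSpace α] {n : ℕ} {X : Set α}
    (h : ColDim (id : α → α) n X) : CovDim n X := by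
  obtain ⟨c, hc, h⟩ := h
  refine ⟨2 * c, by positivity, fun s hs => ?_⟩
  obtain ⟨χ, hχ⟩ := h s hs
  set R := ChainStep (id : α → α) X χ s with hR
  have hsymm : ∀ a b, Relation.ReflTransGen R a b → Relation.ReflTransGen R b a := by
    intro a b hab
    induction hab with
    | refl => exact .refl
    | tail _ h2 ih =>
      refine Relation.ReflTransGen.head ?_ ih
      exact ⟨h2.2.1, h2.1, h2.2.2.1.symm, by rw [dist_comm]; exact h2.2.2.2⟩
  refine ⟨{b | ∃ x ∈ X, b = {y ∈ X | Relation.ReflTransGen R x y}}, ?_, ?_, ?_, ?_⟩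
  · rintro b ⟨x, hx, rfl⟩ y hy
    exact hy.1
  · intro x hx
    exact ⟨_, ⟨x, hx, rfl⟩, hx, .refl⟩
  · rintro b ⟨x, hx, rfl⟩ y hy z hz
    have h1 := hχ x y hx hy.2
    have h2 := hχ x z hx hz.2
    simp only [id] at h1 h2
    have := dist_triangle_left y z x
    linarith
  · intro T hT hTs
    have : {b ∈ {b | ∃ x ∈ X, b = {y ∈ X | Relation.ReflTransGen R x y}} | (T ∩ b).Nonempty} ⊆
        (fun j : Fin (n + 1) => {y ∈ X | ∃ t ∈ T, χ t = j ∧ Relation.ReflTransGen R t y}) ''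
          univ := by
      rintro b ⟨⟨x, hx, rfl⟩, t, htT, htX, hxt⟩
      refine ⟨χ t, mem_univ _, ?_⟩
      ext y
      constructor
      · rintro ⟨hy, u, huT, hu, huy⟩
        refine ⟨hy, hxt.trans (.head ?_ huy)⟩
        exact ⟨htX, hT huT, hu.symm, hTs t htT u huT⟩
      · rintro ⟨hy, hxy⟩
        exact ⟨hy, t, htT, rfl, (hsymm _ _ hxt).trans hxy⟩
    refine (encard_le_encard this).trans ((encard_image_le _ _).trans ?_)
    simp [Set.encard_univ]

lemma colDim_of_covDim {α : Type*} [PseudoMetricSpace α] {n : ℕ} {X : Set α}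
    (h : CovDim n X) : ColDim (id : α → α) n X := by
  classical
  obtain ⟨c, hc, h⟩ := h
  refine ⟨c * (4 * (n + 1)) + 2 * (n + 1), by positivity, fun s hs => ?_⟩
  obtain ⟨B, hBX, hXB, hBd, hBm⟩ := h (4 * (n + 1) * s) (by positivity)
  let good : Fin (n + 1) → α → Prop := fun j x => ∀ b ∈ B, b.Nonempty →
    ¬ ((j : ℕ) * (2 * s) < infDist x b ∧ infDist x b < ((j : ℕ) + 1) * (2 * s))
  have hgood : ∀ x ∈ X, ∃ j, good j x := by
    intro x hx
    by_contra hcon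
    simp only [good] at hcon
    push Not at hcon
    choose b hbB hbne hb1 hb2 using hcon
    obtain ⟨b0, hb0B, hxb0⟩ := hXB hx
    have hinj : Function.Injective b := by
      intro i j hij
      by_contra hne
      rcases lt_or_gt_of_ne (fun h => hne (Fin.ext h) : (i : ℕ) ≠ j) with hlt | hlt
      · have h1 := hb2 i
        have h2 := hb1 j
        rw [hij] at h1
        have : ((i : ℕ) : ℝ) + 1 ≤ (j : ℕ) := by exact_mod_cast hlt
        nlinarith
      · have h1 := hb2 j
        have h2 := hb1 i
        rw [hij] at h2
        have : ((j : ℕ) : ℝ) + 1 ≤ (i : ℕ) := by exact_mod_cast hlt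
        nlinarith
    have hb0 : ∀ j, b j ≠ b0 := by
      intro j hj
      have h1 := hb1 j
      rw [hj, infDist_zero_of_mem hxb0] at h1
      have : 0 ≤ ((j : ℕ) : ℝ) * (2 * s) := by positivity
      linarith
    let T : Set α := {y ∈ X | dist y x ≤ (n + 1) * (2 * s)}
    have hT := hBm T (fun y hy => hy.1) (by
      intro y hy z hz
      have := dist_triangle_right y z x
      have h1 := hy.2
      have h2 := hz.2
      linarith)
    have hsub : insert b0 (range b) ⊆ {b ∈ B | (T ∩ b).Nonempty} := by
      intro b' hb'
      rcases hb' with rfl | ⟨j, rfl⟩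
      · refine ⟨hb0B, x, ⟨hx, ?_⟩, hxb0⟩
        rw [dist_self]; positivity
      · refine ⟨hbB j, ?_⟩
        obtain ⟨y, hy, hd⟩ := (infDist_lt_iff (hbne j)).1 (hb2 j)
        refine ⟨y, ⟨hBX _ (hbB j) hy, ?_⟩, hy⟩
        rw [dist_comm]
        refine hd.le.trans ?_
        have : ((j : ℕ) : ℝ) ≤ n := by exact_mod_cast Nat.lt_succ_iff.1 j.2
        gcongr
    have h1 := (encard_le_encard hsub).trans hT
    rw [encard_insert_of_notMem (by rintro ⟨j, hj⟩; exact hb0 j hj)] at h1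
    have h2 : (range b).encard = (n : ℕ∞) + 1 := by
      rw [← image_univ, hinj.encard_image, Set.encard_univ]
      simp
    rw [h2] at h1
    have h3 : n + 1 + 1 ≤ n + 1 := by exact_mod_cast h1
    omega
  let χ : α → Fin (n + 1) := fun x => if hx : ∃ j, good j x then hx.choose else 0
  have hχ : ∀ x ∈ X, good (χ x) x := by
    intro x hx
    have := hgood x hx
    simp only [χ, dif_pos this]
    exact this.choose_spec
  refine ⟨χ, fun x y hx hxy => ?_⟩
  obtain ⟨b0, hb0B, hxb0⟩ := hXB hx
  have key : χ y = χ x ∧ infDist y b0 ≤ ((χ x : Fin (n + 1)) : ℕ) * (2 * s) := by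
    induction hxy with
    | refl =>
      refine ⟨rfl, ?_⟩
      rw [infDist_zero_of_mem hxb0]; positivity
    | @tail y z _ h2 ih =>
      obtain ⟨hy, hz, hc1, hd⟩ := h2
      obtain ⟨h1, h2⟩ := ih
      have hzx : χ z = χ x := hc1 ▸ h1
      refine ⟨hzx, ?_⟩
      have hg := hχ z hz b0 hb0B ⟨x, hxb0⟩
      rw [hzx] at hg
      by_contra hcon
      push Not at hcon
      refine hg ⟨hcon, ?_⟩
      have := infDist_le_infDist_add_dist (s := b0) (x := z) (y := y)
      simp only [id] at hd
      rw [dist_comm] at hd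
      linarith
  have hle : (((χ x : Fin (n + 1)) : ℕ) : ℝ) ≤ n := by
    exact_mod_cast Nat.lt_succ_iff.1 (χ x).2
  have hlt : infDist y b0 < (n + 1) * (2 * s) := by
    refine key.2.trans_lt ?_
    nlinarith
  obtain ⟨u, hu, hd⟩ := (infDist_lt_iff ⟨x, hxb0⟩).1 hlt
  have h1 := hBd b0 hb0B x hxb0 u hu
  have h2 := dist_triangle_right x y u
  simp only [id]
  linarith

lemma ColDim.mono {α E : Type*} [PseudoMetricSpace E] {F : α → E} {n : ℕ} {A B : Set α}
    (h : ColDim F n B) (hAB : A ⊆ B) : ColDim F n A := by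
  obtain ⟨c, hc, h⟩ := h
  refine ⟨c, hc, fun s hs => ?_⟩
  obtain ⟨χ, hχ⟩ := h s hs
  refine ⟨χ, fun x y hx hxy => hχ x y (hAB hx) (hxy.lift id ?_)⟩
  rintro a b ⟨ha, hb, h⟩
  exact ⟨hAB ha, hAB hb, h⟩

lemma ColDim.union {α E : Type*} [PseudoMetricSpace E] {F : α → E} {n : ℕ} {A B : Set α}
    (hA : ColDim F n A) (hB : ColDim F n B) : ColDim F n (A ∪ B) := by
  classical
  obtain ⟨c, hc, hA⟩ := hA
  obtain ⟨c', hc', hB⟩ := hB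
  refine ⟨2 * (c + 1) + c' * (c + 2), by positivity, fun s hs => ?_⟩
  obtain ⟨χ, hχ⟩ := hA s hs
  obtain ⟨ψ, hψ⟩ := hB ((c + 2) * s) (by positivity)
  have hcs : 0 < c * s := by positivity
  have hcs' : 0 < c' * (c + 2) * s := by positivity
  let φ : α → Fin (n + 1) := fun x => if x ∈ B then ψ x else χ x
  refine ⟨φ, fun x y hx hxy => ?_⟩
  have key : (x ∉ B ∧ y ∉ B ∧ x ∈ A ∧ Relation.ReflTransGen (ChainStep F A χ s) x y) ∨
      ∃ b1 b2, b1 ∈ B ∧ b2 ∈ B ∧ dist (F x) (F b1) ≤ (c + 1) * s ∧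
        Relation.ReflTransGen (ChainStep F B ψ ((c + 2) * s)) b1 b2 ∧ φ b2 = φ y ∧
        (y = b2 ∨ ∃ a, a ∈ A ∧ dist (F b2) (F a) ≤ s ∧ y ∉ B ∧
          Relation.ReflTransGen (ChainStep F A χ s) a y) := by
    induction hxy with
    | refl =>
      by_cases hxB : x ∈ B
      · right
        exact ⟨x, x, hxB, hxB, by rw [dist_self]; positivity, .refl, rfl, Or.inl rfl⟩
      · left
        exact ⟨hxB, hxB, hx.resolve_right hxB, .refl⟩
    | @tail y z _ h2 ih =>
      obtain ⟨hy, hz, hcol, hd⟩ := h2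
      rcases ih with ⟨hxB, hyB, hxA, hch⟩ | ⟨b1, b2, hb1, hb2, hd1, hch, hc2, hor⟩
      · by_cases hzB : z ∈ B
        · right
          refine ⟨z, z, hzB, hzB, ?_, .refl, rfl, Or.inl rfl⟩
          have h1 := hχ x y hxA hch
          have := dist_triangle (F x) (F y) (F z)
          linarith
        · left
          refine ⟨hxB, hzB, hxA, hch.tail ⟨hy.resolve_right hyB, hz.resolve_right hzB, ?_, hd⟩⟩
          simpa [φ, hyB, hzB] using hcol
      · right
        by_cases hzB : z ∈ B
        · refine ⟨b1, z, hb1, hzB, hd1, hch.tail ⟨hb2, hzB, ?_, ?_⟩, rfl, Or.inl rfl⟩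
          · have := hc2.trans hcol
            simpa [φ, hb2, hzB] using this
          · rcases hor with rfl | ⟨a, ha, hda, hyB, hch2⟩
            · nlinarith
            · have h1 := hχ a y ha hch2
              have := dist_triangle4 (F b2) (F a) (F y) (F z)
              linarith
        · refine ⟨b1, b2, hb1, hb2, hd1, hch, hc2.trans hcol, Or.inr ?_⟩
          rcases hor with rfl | ⟨a, ha, hda, hyB, hch2⟩
          · exact ⟨z, hz.resolve_right hzB, hd, hzB, .refl⟩
          · refine ⟨a, ha, hda, hzB, hch2.tail
              ⟨hy.resolve_right hyB, hz.resolve_right hzB, ?_, hd⟩⟩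
            simpa [φ, hyB, hzB] using hcol
  rcases key with ⟨_, _, hxA, hch⟩ | ⟨b1, b2, hb1, hb2, hd1, hch, -, hor⟩
  · have := hχ x y hxA hch
    nlinarith
  · have h1 := hψ b1 b2 hb1 hch
    rcases hor with rfl | ⟨a, ha, hda, hyB, hch2⟩
    · have := dist_triangle (F x) (F b1) (F y)
      nlinarith
    · have h2 := hχ a y ha hch2
      have h3 := dist_triangle4 (F x) (F b1) (F b2) (F y)
      have h4 := dist_triangle (F b2) (F a) (F y)
      nlinarith

lemma colDim_empty {α E : Type*} [PseudoMetricSpace E] (F : α → E) (n : ℕ) :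
    ColDim F n (∅ : Set α) :=
  ⟨1, one_pos, fun _ _ => ⟨fun _ => 0, fun _ _ hx => absurd hx (notMem_empty _)⟩⟩

lemma colDim_biUnion {α E ι : Type*} [PseudoMetricSpace E] (F : α → E) (n : ℕ)
    {t : Set ι} (ht : t.Finite) (W : ι → Set α) (h : ∀ i ∈ t, ColDim F n (W i)) :
    ColDim F n (⋃ i ∈ t, W i) := by
  induction t, ht using Set.Finite.induction_on with
  | empty => simpa using colDim_empty F n
  | @insert a s _ _ ih =>
    rw [biUnion_insert]
    exact (h a (mem_insert _ _)).union (ih fun i hi => h i (mem_insert_of_mem _ hi))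

lemma colDim_image {α E : Type*} [PseudoMetricSpace E] (f : α → E) (n : ℕ) (A : Set α) :
    ColDim (id : E → E) n (f '' A) ↔ ColDim f n A := by
  classical
  constructor
  · rintro ⟨c, hc, h⟩
    refine ⟨c, hc, fun s hs => ?_⟩
    obtain ⟨χ, hχ⟩ := h s hs
    refine ⟨χ ∘ f, fun x y hx hxy => hχ (f x) (f y) (mem_image_of_mem _ hx) (hxy.lift f ?_)⟩
    rintro a b ⟨ha, hb, h1, h2⟩
    exact ⟨mem_image_of_mem _ ha, mem_image_of_mem _ hb, h1, h2⟩
  · rintro ⟨c, hc, h⟩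
    rcases isEmpty_or_nonempty α with hα | hα
    · rw [Set.eq_empty_of_isEmpty A, image_empty]
      exact colDim_empty _ _
    refine ⟨c, hc, fun s hs => ?_⟩
    obtain ⟨χ, hχ⟩ := h s hs
    have hg : ∀ y : E, ∃ x, y ∈ f '' A → x ∈ A ∧ f x = y := by
      intro y
      by_cases hy : y ∈ f '' A
      · obtain ⟨x, hx, hxy⟩ := hy
        exact ⟨x, fun _ => ⟨hx, hxy⟩⟩
      · exact ⟨Classical.arbitrary α, fun h => absurd h hy⟩
    choose g hg using hg
    refine ⟨χ ∘ g, fun x y hx hxy => ?_⟩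
    have hy : y ∈ f '' A := by
      cases hxy with
      | refl => exact hx
      | tail _ h => exact h.2.1
    have := hχ (g x) (g y) (hg x hx).1 (hxy.lift g (by
      rintro a b ⟨ha, hb, h1, h2⟩
      refine ⟨(hg a ha).1, (hg b hb).1, h1, ?_⟩
      rw [(hg a ha).2, (hg b hb).2]
      exact h2))
    rwa [(hg x hx).2, (hg y hy).2] at this

lemma colDim_transfer_aux {α : Type*} (F G : α → ℂ) (n : ℕ) (A E : Set α) (K : ℝ) (hK : 0 < K)
    (hF : ∀ x ∈ A, F x ≠ 0) (hG : ∀ x ∈ A, G x ≠ 0)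
    (h : ∀ x ∈ A, ∀ y ∈ A, ‖G x‖ ≤ 2 * ‖G y‖ → ‖G y‖ ≤ 2 * ‖G x‖ → ‖F x‖ ≤ K * ‖F y‖ ∧
      dist (F x) (F y) * ‖G x‖ ≤ K * (dist (G x) (G y) * ‖F x‖) ∧
      dist (G x) (G y) * ‖F x‖ ≤ K * (dist (F x) (F y) * ‖G x‖))
    (hEA : E ⊆ A)
    (hE : ∀ x ∈ E, ∀ y ∈ E, Int.log 2 ‖G x‖ < Int.log 2 ‖G y‖ →
      Int.log 2 ‖G x‖ + 2 ≤ Int.log 2 ‖G y‖)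
    (hQ : ColDim F n A) : ColDim G n E := by
  classical
  obtain ⟨c, hc, hQ⟩ := hQ
  refine ⟨8 + 2 * c * K ^ 4, by positivity, fun s hs => ?_⟩
  set l : α → ℤ := fun x => Int.log 2 ‖G x‖ with hl
  have hl1 : ∀ x ∈ A, (2 : ℝ) ^ (l x) ≤ ‖G x‖ := fun x hx => by
    have := Int.zpow_log_le_self (b := 2) (by norm_num) (norm_pos_iff.2 (hG x hx))
    simpa using this
  have hl2 : ∀ x, ‖G x‖ < (2 : ℝ) ^ (l x + 1) := fun x => by
    have := Int.lt_zpow_succ_log_self (b := 2) (by norm_num) ‖G x‖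
    simpa using this
  set k0 : ℤ := Int.log 2 s + 1 with hk0
  have hk1 : (2 : ℝ) ^ k0 ≤ 2 * s := by
    have := Int.zpow_log_le_self (b := 2) (by norm_num) hs
    rw [hk0, zpow_add₀ (by norm_num)]
    simp only [Nat.cast_ofNat] at this
    norm_num
    linarith
  have hk2 : s < (2 : ℝ) ^ k0 := by
    have := Int.lt_zpow_succ_log_self (b := 2) (by norm_num) s
    simpa using this
  -- colourings on each level
  have hlev : ∀ k : ℤ, ∃ χ : α → Fin (n + 1), ∀ x y, x ∈ A → l x = k →
      Relation.ReflTransGen (fun a b => a ∈ A ∧ b ∈ A ∧ l a = k ∧ l b = k ∧ χ a = χ b ∧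
        dist (G a) (G b) ≤ s) x y → dist (G x) (G y) ≤ 2 * c * K ^ 4 * s := by
    intro k
    by_cases hne : ∃ x0 ∈ A, l x0 = k
    swap
    · exact ⟨fun _ => 0, fun x y hx hxk => absurd ⟨x, hx, hxk⟩ hne⟩
    obtain ⟨x0, hx0, hx0k⟩ := hne
    have hρ : 0 < ‖F x0‖ := norm_pos_iff.2 (hF x0 hx0)
    have h2k : (0 : ℝ) < 2 ^ k := by positivity
    have hcmp : ∀ x ∈ A, ∀ y ∈ A, l x = k → l y = k → ‖G x‖ ≤ 2 * ‖G y‖ := by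
      intro x hx y hy hxk hyk
      have h1 := hl2 x
      have h2 := hl1 y hy
      rw [hxk, zpow_add₀ (by norm_num)] at h1
      rw [hyk] at h2
      norm_num at h1
      linarith
    obtain ⟨χ, hχ⟩ := hQ (K ^ 2 * ‖F x0‖ * s / 2 ^ k) (by positivity)
    refine ⟨χ, fun x y hx hxk hxy => ?_⟩
    have hy : y ∈ A ∧ l y = k := by
      cases hxy with
      | refl => exact ⟨hx, hxk⟩
      | tail _ h => exact ⟨h.2.1, h.2.2.2.1⟩
    have hd := hχ x y hx (hxy.lift id (by
      rintro a b ⟨ha, hb, hak, hbk, hcol, hd⟩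
      refine ⟨ha, hb, hcol, ?_⟩
      have h1 := (h a ha b hb (hcmp a ha b hb hak hbk) (hcmp b hb a ha hbk hak)).2.1
      have h2 := (h a ha x0 hx0 (hcmp a ha x0 hx0 hak hx0k) (hcmp x0 hx0 a ha hx0k hak)).1
      have h3 := hl1 a ha
      rw [hak] at h3
      rw [le_div_iff₀ h2k]
      calc dist (F a) (F b) * 2 ^ k ≤ dist (F a) (F b) * ‖G a‖ := by gcongr
        _ ≤ K * (dist (G a) (G b) * ‖F a‖) := h1
        _ ≤ K * (s * (K * ‖F x0‖)) := by gcongr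
        _ = _ := by ring))
    have h1 := (h x hx y hy.1 (hcmp x hx y hy.1 hxk hy.2) (hcmp y hy.1 x hx hy.2 hxk)).2.2
    have h2 := (h x0 hx0 x hx (hcmp x0 hx0 x hx hx0k hxk) (hcmp x hx x0 hx0 hxk hx0k)).1
    have h3 : ‖G x‖ ≤ 2 * 2 ^ k := by
      have h1 := hl2 x
      rw [hxk, zpow_add₀ (by norm_num)] at h1
      norm_num at h1
      linarith
    have hFx : 0 < ‖F x‖ := norm_pos_iff.2 (hF x hx)
    have h4 : dist (G x) (G y) * ‖F x‖ ≤ (2 * c * K ^ 4 * s) * ‖F x‖ := by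
      calc dist (G x) (G y) * ‖F x‖ ≤ K * (dist (F x) (F y) * ‖G x‖) := h1
        _ ≤ K * ((c * (K ^ 2 * ‖F x0‖ * s / 2 ^ k)) * (2 * 2 ^ k)) := by gcongr
        _ = 2 * c * K ^ 3 * s * ‖F x0‖ := by field_simp
        _ ≤ 2 * c * K ^ 3 * s * (K * ‖F x‖) := by gcongr
        _ = _ := by ring
    exact le_of_mul_le_mul_right h4 hFx
  choose χ hχ using hlev
  let φ : α → Fin (n + 1) := fun x => if l x ≤ k0 then 0 else χ (l x) x
  have hsep : ∀ a ∈ E, ∀ b ∈ E, l a < l b → k0 < l b → s < dist (G a) (G b) := by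
    intro a ha b hb hab hkb
    have h1 := hE a ha b hb hab
    have h2 := hl1 b (hEA hb)
    have h3 := hl2 a
    have h4 : (2 : ℝ) ^ (l a + 1) ≤ 2 ^ (l b - 1) :=
      zpow_le_zpow_right₀ (by norm_num) (by simp only [hl]; omega)
    have h5 : (2 : ℝ) ^ k0 ≤ 2 ^ (l b - 1) :=
      zpow_le_zpow_right₀ (by norm_num) (by omega)
    have h6 : (2 : ℝ) ^ (l b) = 2 * 2 ^ (l b - 1) := by
      rw [zpow_sub₀ (by norm_num)]; norm_num; ring
    have h7 : ‖G b‖ - ‖G a‖ ≤ dist (G a) (G b) := by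
      rw [dist_comm, dist_eq_norm]; exact norm_sub_norm_le _ _
    linarith
  refine ⟨φ, fun x y hx hxy => ?_⟩
  have hstep : ∀ a b, ChainStep G E φ s a b → (l a ≤ k0 ∧ l b ≤ k0) ∨ (k0 < l a ∧ l a = l b) := by
    rintro a b ⟨ha, hb, hcol, hd⟩
    rcases lt_trichotomy (l a) (l b) with hlt | heq | hlt
    · left
      by_contra hcon
      have := hsep a ha b hb hlt (by omega)
      linarith
    · rcases le_or_gt (l a) k0 with h' | h'
      · exact Or.inl ⟨h', heq ▸ h'⟩
      · exact Or.inr ⟨h', heq⟩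
    · left
      by_contra hcon
      have := hsep b hb a ha hlt (by omega)
      rw [dist_comm] at this
      linarith
  rcases le_or_gt (l x) k0 with hxk | hxk
  · have hyk : l y ≤ k0 := by
      induction hxy with
      | refl => exact hxk
      | tail _ h2 ih =>
        rcases hstep _ _ h2 with h' | h'
        · exact h'.2
        · omega
    have hb : ∀ z, l z ≤ k0 → ‖G z‖ ≤ 4 * s := by
      intro z hz
      have h1 := hl2 z
      have h2 : (2 : ℝ) ^ (l z + 1) ≤ 2 ^ (k0 + 1) :=
        zpow_le_zpow_right₀ (by norm_num) (by omega)
      rw [zpow_add₀ (by norm_num) k0] at h2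
      norm_num at h2
      linarith
    have h1 : dist (G x) (G y) ≤ ‖G x‖ + ‖G y‖ := dist_le_norm_add_norm _ _
    have h2 := hb x hxk
    have h3 := hb y hyk
    have : 0 ≤ 2 * c * K ^ 4 * s := by positivity
    linarith
  · have hch : l y = l x ∧ Relation.ReflTransGen (fun a b => a ∈ A ∧ b ∈ A ∧ l a = l x ∧
        l b = l x ∧ χ (l x) a = χ (l x) b ∧ dist (G a) (G b) ≤ s) x y := by
      induction hxy with
      | refl => exact ⟨rfl, .refl⟩
      | @tail y z _ h2 ih =>
        rcases hstep _ _ h2 with h' | h'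
        · omega
        · have hzx : l z = l x := h'.2 ▸ ih.1
          refine ⟨hzx, ih.2.tail ⟨hEA h2.1, hEA h2.2.1, ih.1, hzx, ?_, h2.2.2.2⟩⟩
          have hcol := h2.2.2.1
          simp only [φ] at hcol
          rw [if_neg (by omega), if_neg (by omega), hzx, ih.1] at hcol
          exact hcol
    have := hχ (l x) x y (hEA hx) rfl hch.2
    linarith

lemma colDim_transfer {α : Type*} (F G : α → ℂ) (n : ℕ) (A : Set α) (K : ℝ) (hK : 0 < K)
    (hF : ∀ x ∈ A, F x ≠ 0) (hG : ∀ x ∈ A, G x ≠ 0)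
    (h : ∀ x ∈ A, ∀ y ∈ A, ‖G x‖ ≤ 2 * ‖G y‖ → ‖G y‖ ≤ 2 * ‖G x‖ → ‖F x‖ ≤ K * ‖F y‖ ∧
      dist (F x) (F y) * ‖G x‖ ≤ K * (dist (G x) (G y) * ‖F x‖) ∧
      dist (G x) (G y) * ‖F x‖ ≤ K * (dist (F x) (F y) * ‖G x‖))
    (hQ : ColDim F n A) : ColDim G n A := by
  have h0 := colDim_transfer_aux F G n A {x ∈ A | Int.log 2 ‖G x‖ % 2 = 0} K hK hF hG h
    (fun x hx => hx.1) (by rintro x ⟨_, hx⟩ y ⟨_, hy⟩ hxy; omega) hQ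
  have h1 := colDim_transfer_aux F G n A {x ∈ A | Int.log 2 ‖G x‖ % 2 = 1} K hK hF hG h
    (fun x hx => hx.1) (by rintro x ⟨_, hx⟩ y ⟨_, hy⟩ hxy; omega) hQ
  refine (h0.union h1).mono fun x hx => ?_
  rcases Int.emod_two_eq_zero_or_one (Int.log 2 ‖G x‖) with h' | h'
  · exact Or.inl ⟨hx, h'⟩
  · exact Or.inr ⟨hx, h'⟩

lemma unit_pow_sub (a u : ℂ) (ha : ‖a‖ = 1) (hu : ‖u‖ = 1) (ε : ℝ) (h : ‖a - u‖ ≤ ε) (i : ℕ) :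
    ‖a ^ i - u ^ i‖ ≤ i * ε := by
  induction i with
  | zero => simp
  | succ i ih =>
    have e : a ^ (i + 1) - u ^ (i + 1) = a ^ i * (a - u) + (a ^ i - u ^ i) * u := by ring
    rw [e]
    refine (norm_add_le _ _).trans ?_
    rw [norm_mul, norm_mul, norm_pow, ha, hu]
    push_cast
    simp only [one_pow, one_mul, mul_one]
    linarith

/-- In a thin sector, the geometric sum is comparable to the sum of the norms. -/
lemma sector_sum (m : ℕ) (ε : ℝ) (hε : m * ε ≤ 1 / 2) (hε0 : 0 ≤ ε) (u v v' : ℂ) (hu : ‖u‖ = 1)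
    (hv : ‖v‖ = 1) (hv' : ‖v'‖ = 1) (hvu : ‖v - u‖ ≤ ε) (hvu' : ‖v' - u‖ ≤ ε)
    (r r' : ℝ) (hr : 0 ≤ r) (hr' : 0 ≤ r') :
    (∑ i ∈ Finset.range m, r ^ i * r' ^ (m - 1 - i)) / 2 ≤
      ‖∑ i ∈ Finset.range m, ((r : ℂ) * v) ^ i * ((r' : ℂ) * v') ^ (m - 1 - i)‖ := by
  set σ := ∑ i ∈ Finset.range m, r ^ i * r' ^ (m - 1 - i) with hσ
  have hσ0 : 0 ≤ σ := Finset.sum_nonneg fun i _ => by positivity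
  have h1 : ‖∑ i ∈ Finset.range m, ((r : ℂ) * v) ^ i * ((r' : ℂ) * v') ^ (m - 1 - i)
      - (σ : ℂ) * u ^ (m - 1)‖ ≤ σ * (m * ε) := by
    rw [hσ, Complex.ofReal_sum, Finset.sum_mul, ← Finset.sum_sub_distrib, Finset.sum_mul]
    refine (norm_sum_le _ _).trans (Finset.sum_le_sum fun i hi => ?_)
    have him : i + (m - 1 - i) = m - 1 := by
      have := Finset.mem_range.1 hi
      omega
    have e : ((r : ℂ) * v) ^ i * ((r' : ℂ) * v') ^ (m - 1 - i)
        - ((r ^ i * r' ^ (m - 1 - i) : ℝ) : ℂ) * u ^ (m - 1)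
        = ((r ^ i * r' ^ (m - 1 - i) : ℝ) : ℂ) *
          (v ^ i * (v' ^ (m - 1 - i) - u ^ (m - 1 - i)) + (v ^ i - u ^ i) * u ^ (m - 1 - i)) := by
      rw [show u ^ (m - 1) = u ^ i * u ^ (m - 1 - i) by rw [← pow_add, him]]
      push_cast
      ring
    rw [e, norm_mul, Complex.norm_real, Real.norm_of_nonneg (by positivity)]
    refine mul_le_mul_of_nonneg_left ?_ (by positivity)
    refine (norm_add_le _ _).trans ?_
    rw [norm_mul, norm_mul, norm_pow, norm_pow, hv, hu]
    simp only [one_pow, one_mul, mul_one]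
    have h2 := unit_pow_sub v u hv hu ε hvu i
    have h3 := unit_pow_sub v' u hv' hu ε hvu' (m - 1 - i)
    have h4 : (i : ℝ) + ((m - 1 - i : ℕ) : ℝ) ≤ m := by
      have : i + (m - 1 - i) ≤ m := by omega
      exact_mod_cast this
    nlinarith
  have h2 : ‖(σ : ℂ) * u ^ (m - 1)‖ = σ := by
    rw [norm_mul, norm_pow, hu, Complex.norm_real, Real.norm_of_nonneg hσ0]; simp
  have h3 := norm_sub_norm_le ((σ : ℂ) * u ^ (m - 1))
    (∑ i ∈ Finset.range m, ((r : ℂ) * v) ^ i * ((r' : ℂ) * v') ^ (m - 1 - i))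
  rw [norm_sub_rev, h2] at h3
  have h4 : σ * (m * ε) ≤ σ * (1 / 2) := by gcongr
  linarith

lemma q_est (m : ℕ) (hm : 1 ≤ m) (H L : ℝ) (hL : 0 ≤ L) (w w' η η' : ℂ)
    (σ : ℝ) (hσ : σ = ∑ i ∈ Finset.range m, ‖w‖ ^ i * ‖w'‖ ^ (m - 1 - i))
    (hS : σ / 2 ≤ ‖∑ i ∈ Finset.range m, w ^ i * w' ^ (m - 1 - i)‖)
    (h1 : H / 2 ≤ ‖η‖) (h2 : ‖η‖ ≤ 2 * H)
    (hη : ‖η - η'‖ ≤ L * ‖w - w'‖) (hLw : L * ‖w'‖ ≤ H / 8) (hH : 0 < H) :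
    H / 8 * σ * ‖w - w'‖ ≤ ‖w ^ m * η - w' ^ m * η'‖ ∧
    ‖w ^ m * η - w' ^ m * η'‖ ≤ 3 * H * σ * ‖w - w'‖ ∧ ‖w'‖ ^ (m - 1) ≤ σ := by
  have hσ0 : 0 ≤ σ := hσ ▸ Finset.sum_nonneg fun i _ => by positivity
  have h0 : ‖w'‖ ^ (m - 1) ≤ σ := by
    rw [hσ]
    have := Finset.single_le_sum (f := fun i => ‖w‖ ^ i * ‖w'‖ ^ (m - 1 - i))
      (fun i _ => by positivity) (Finset.mem_range.2 (show 0 < m by omega))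
    simpa using this
  set S := ∑ i ∈ Finset.range m, w ^ i * w' ^ (m - 1 - i) with hSdef
  have hS2 : ‖S‖ ≤ σ := by
    rw [hσ, hSdef]
    refine (norm_sum_le _ _).trans (le_of_eq ?_)
    simp
  have e : w ^ m * η - w' ^ m * η' = S * (w - w') * η + w' ^ m * (η - η') := by
    rw [hSdef, Commute.geom_sum₂_mul (Commute.all w w')]; ring
  have h3 : ‖w' ^ m * (η - η')‖ ≤ H / 8 * σ * ‖w - w'‖ := by
    rw [norm_mul, norm_pow]
    calc ‖w'‖ ^ m * ‖η - η'‖ ≤ ‖w'‖ ^ m * (L * ‖w - w'‖) := by gcongr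
      _ = ‖w'‖ ^ (m - 1) * (L * ‖w'‖) * ‖w - w'‖ := by
        obtain ⟨k, rfl⟩ : ∃ k, m = k + 1 := ⟨m - 1, by omega⟩
        simp only [Nat.add_sub_cancel]; ring
      _ ≤ σ * (H / 8) * ‖w - w'‖ := by gcongr
      _ = _ := by ring
  have h4 : ‖S * (w - w') * η‖ = ‖S‖ * ‖w - w'‖ * ‖η‖ := by rw [norm_mul, norm_mul]
  have h5 : ‖S‖ * ‖w - w'‖ * ‖η‖ ≤ σ * ‖w - w'‖ * (2 * H) := by gcongr
  have h6 : σ / 2 * ‖w - w'‖ * (H / 2) ≤ ‖S‖ * ‖w - w'‖ * ‖η‖ := by gcongr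
  have h8 : 0 ≤ H * σ * ‖w - w'‖ := by positivity
  refine ⟨?_, ?_, h0⟩
  · rw [e]
    have h7 := norm_sub_le_norm_add (S * (w - w') * η) (w' ^ m * (η - η'))
    linarith
  · rw [e]
    have h7 := norm_add_le (S * (w - w') * η) (w' ^ m * (η - η'))
    linarith

lemma fg_est (m : ℕ) (hm : 1 ≤ m) (H L : ℝ) (hL : 0 ≤ L) (w w' η η' : ℂ) (hw : w ≠ 0)
    (hw' : w' ≠ 0)
    (hS : (∑ i ∈ Finset.range m, ‖w‖ ^ i * ‖w'‖ ^ (m - 1 - i)) / 2 ≤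
      ‖∑ i ∈ Finset.range m, w ^ i * w' ^ (m - 1 - i)‖)
    (h1 : H / 2 ≤ ‖η‖) (h2 : ‖η‖ ≤ 2 * H) (h1' : H / 2 ≤ ‖η'‖) (h2' : ‖η'‖ ≤ 2 * H)
    (hη : ‖η - η'‖ ≤ L * ‖w - w'‖) (hLw : L * ‖w'‖ ≤ H / 8) (hH : 0 < H)
    (hr : ‖w‖ ≤ 8 * ‖w'‖) (hr' : ‖w'‖ ≤ 8 * ‖w‖) :
    dist w w' * ‖(w ^ m * η)⁻¹‖ ≤
      (6 * m * 8 ^ m + 128) * (dist (w ^ m * η)⁻¹ (w' ^ m * η')⁻¹ * ‖w‖) ∧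
    dist (w ^ m * η)⁻¹ (w' ^ m * η')⁻¹ * ‖w‖ ≤
      (6 * m * 8 ^ m + 128) * (dist w w' * ‖(w ^ m * η)⁻¹‖) := by
  obtain ⟨ha, hb, hc⟩ := q_est m hm H L hL w w' η η' _ rfl hS h1 h2 hη hLw hH
  set σ := ∑ i ∈ Finset.range m, ‖w‖ ^ i * ‖w'‖ ^ (m - 1 - i) with hσ
  have hσ0 : 0 ≤ σ := Finset.sum_nonneg fun i _ => by positivity
  have hη0 : η ≠ 0 := by rintro rfl; simp at h1; linarith
  have hη0' : η' ≠ 0 := by rintro rfl; simp at h1'; linarith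
  have hpw : 0 < ‖w‖ := norm_pos_iff.2 hw
  have hpw' : 0 < ‖w'‖ := norm_pos_iff.2 hw'
  have hmm : ‖w'‖ ^ m = ‖w'‖ ^ (m - 1) * ‖w'‖ := by
    rw [← pow_succ]; congr 1; omega
  have hq' : ‖w' ^ m * η'‖ = ‖w'‖ ^ m * ‖η'‖ := by rw [norm_mul, norm_pow]
  have hσw : σ * ‖w‖ ≤ m * 8 ^ m * ‖w'‖ ^ m := by
    rw [hσ, Finset.sum_mul]
    refine (Finset.sum_le_card_nsmul _ _ (8 ^ m * ‖w'‖ ^ m) fun i hi => ?_).trans (le_of_eq ?_)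
    · have hi := Finset.mem_range.1 hi
      calc ‖w‖ ^ i * ‖w'‖ ^ (m - 1 - i) * ‖w‖ = ‖w‖ ^ (i + 1) * ‖w'‖ ^ (m - 1 - i) := by ring
        _ ≤ (8 * ‖w'‖) ^ (i + 1) * ‖w'‖ ^ (m - 1 - i) := by gcongr
        _ = 8 ^ (i + 1) * ‖w'‖ ^ (i + 1 + (m - 1 - i)) := by rw [mul_pow, pow_add]; ring
        _ = 8 ^ (i + 1) * ‖w'‖ ^ m := by congr 2; omega
        _ ≤ 8 ^ m * ‖w'‖ ^ m := by
          gcongr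
          · norm_num
          · omega
    · simp; ring
  set q := w ^ m * η with hq
  set q' := w' ^ m * η' with hqq'
  have hq0 : q ≠ 0 := mul_ne_zero (pow_ne_zero _ hw) hη0
  have hq0' : q' ≠ 0 := mul_ne_zero (pow_ne_zero _ hw') hη0'
  have hpq : 0 < ‖q‖ := norm_pos_iff.2 hq0
  have hpq' : 0 < ‖q'‖ := norm_pos_iff.2 hq0'
  have hd : dist q⁻¹ q'⁻¹ = ‖q - q'‖ / (‖q‖ * ‖q'‖) := by
    rw [dist_eq_norm, inv_sub_inv hq0 hq0', norm_div, norm_mul, norm_sub_rev]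
  have hA : ‖w - w'‖ * ‖q'‖ ≤ (6 * m * 8 ^ m + 128) * (‖q - q'‖ * ‖w‖) := by
    have hle : ‖q'‖ ≤ 16 * H * σ * ‖w‖ := by
      rw [hq', hmm]
      calc ‖w'‖ ^ (m - 1) * ‖w'‖ * ‖η'‖ ≤ σ * (8 * ‖w‖) * (2 * H) :=
            mul_le_mul (mul_le_mul hc hr' (norm_nonneg _) hσ0) h2' (norm_nonneg _)
              (mul_nonneg hσ0 (by linarith))
        _ = _ := by ring
    calc ‖w - w'‖ * ‖q'‖ ≤ ‖w - w'‖ * (16 * H * σ * ‖w‖) := by gcongr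
      _ = 128 * ((H / 8 * σ * ‖w - w'‖) * ‖w‖) := by ring
      _ ≤ 128 * (‖q - q'‖ * ‖w‖) := by gcongr
      _ ≤ _ := by
        gcongr
        have : (0 : ℝ) ≤ 6 * m * 8 ^ m := by positivity
        linarith
  have hB : ‖q - q'‖ * ‖w‖ ≤ (6 * m * 8 ^ m + 128) * (‖w - w'‖ * ‖q'‖) := by
    have hle : ‖w'‖ ^ m * H ≤ 2 * ‖q'‖ := by
      rw [hq']
      have : ‖w'‖ ^ m * (H / 2) ≤ ‖w'‖ ^ m * ‖η'‖ := by gcongr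
      linarith
    calc ‖q - q'‖ * ‖w‖ ≤ 3 * H * σ * ‖w - w'‖ * ‖w‖ := by gcongr
      _ = 3 * H * ‖w - w'‖ * (σ * ‖w‖) := by ring
      _ ≤ 3 * H * ‖w - w'‖ * (m * 8 ^ m * ‖w'‖ ^ m) := by gcongr
      _ = 3 * ‖w - w'‖ * (m * 8 ^ m) * (‖w'‖ ^ m * H) := by ring
      _ ≤ 3 * ‖w - w'‖ * (m * 8 ^ m) * (2 * ‖q'‖) := by gcongr
      _ = (6 * m * 8 ^ m) * (‖w - w'‖ * ‖q'‖) := by ring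
      _ ≤ _ := by gcongr; linarith
  rw [hd, norm_inv, dist_eq_norm]
  have e1 : ‖w - w'‖ * ‖q‖⁻¹ = (‖w - w'‖ * ‖q'‖) / (‖q‖ * ‖q'‖) := by
    clear_value q q'
    field_simp
  have e2 : ‖q - q'‖ / (‖q‖ * ‖q'‖) * ‖w‖ = (‖q - q'‖ * ‖w‖) / (‖q‖ * ‖q'‖) := by
    clear_value q q'
    field_simp
  rw [e1, e2, ← mul_div_assoc, ← mul_div_assoc]
  constructor <;> gcongr

/-- The equivalence on a thin sector. -/
lemma sector_iff (m : ℕ) (hm : 1 ≤ m) (H L ε : ℝ) (hL : 0 ≤ L) (hH : 0 < H) (hε0 : 0 ≤ ε)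
    (hε : m * ε ≤ 1 / 2) (p u : ℂ) (hu : ‖u‖ = 1) (f h : ℂ → ℂ) (A : Set ℂ)
    (hAp : ∀ z ∈ A, z ≠ p) (hAu : ∀ z ∈ A, ‖(z - p) / (‖z - p‖ : ℂ) - u‖ ≤ ε)
    (h1 : ∀ z ∈ A, H / 2 ≤ ‖h z‖) (h2 : ∀ z ∈ A, ‖h z‖ ≤ 2 * H)
    (hlip : ∀ z ∈ A, ∀ z' ∈ A, ‖h z - h z'‖ ≤ L * ‖z - z'‖)
    (hLw : ∀ z ∈ A, L * ‖z - p‖ ≤ H / 8)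
    (hf : ∀ z ∈ A, f z = ((z - p) ^ m * h z)⁻¹) (n : ℕ) :
    ColDim (fun z => z - p) n A ↔ ColDim f n A := by
  have hw0 : ∀ z ∈ A, z - p ≠ 0 := fun z hz => sub_ne_zero.2 (hAp z hz)
  have hh0 : ∀ z ∈ A, h z ≠ 0 := fun z hz h0 => by
    have := h1 z hz
    rw [h0, norm_zero] at this
    linarith
  have hf0 : ∀ z ∈ A, f z ≠ 0 := fun z hz => by
    rw [hf z hz]
    exact inv_ne_zero (mul_ne_zero (pow_ne_zero _ (hw0 z hz)) (hh0 z hz))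
  have hdec : ∀ z ∈ A, z - p = ((‖z - p‖ : ℝ) : ℂ) * ((z - p) / (‖z - p‖ : ℂ)) := by
    intro z hz
    have : ((‖z - p‖ : ℝ) : ℂ) ≠ 0 := by
      exact_mod_cast (norm_pos_iff.2 (hw0 z hz)).ne'
    field_simp
  have hunit : ∀ z ∈ A, ‖(z - p) / (‖z - p‖ : ℂ)‖ = 1 := by
    intro z hz
    rw [norm_div, Complex.norm_real, norm_norm, div_self (norm_pos_iff.2 (hw0 z hz)).ne']
  set K : ℝ := 6 * m * 8 ^ m + 128 with hK
  have hm1 : (1 : ℝ) ≤ m := by exact_mod_cast hm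
  have hp8 : (1 : ℝ) ≤ 8 ^ m := one_le_pow₀ (by norm_num)
  have hKpos : 128 ≤ K := by
    have : (0 : ℝ) ≤ 6 * m * 8 ^ m := by positivity
    linarith
  have main : ∀ z ∈ A, ∀ z' ∈ A, ‖z - p‖ ≤ 8 * ‖z' - p‖ → ‖z' - p‖ ≤ 8 * ‖z - p‖ →
      dist (z - p) (z' - p) * ‖f z‖ ≤ K * (dist (f z) (f z') * ‖z - p‖) ∧
      dist (f z) (f z') * ‖z - p‖ ≤ K * (dist (z - p) (z' - p) * ‖f z‖) := by
    intro z hz z' hz' hr hr'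
    rw [hf z hz, hf z' hz']
    refine fg_est m hm H L hL _ _ _ _ (hw0 z hz) (hw0 z' hz') ?_ (h1 z hz) (h2 z hz)
      (h1 z' hz') (h2 z' hz') ?_ (hLw z' hz') hH hr hr'
    · have := sector_sum m ε hε hε0 u _ _ hu (hunit z hz) (hunit z' hz') (hAu z hz) (hAu z' hz')
        ‖z - p‖ ‖z' - p‖ (norm_nonneg _) (norm_nonneg _)
      rwa [← hdec z hz, ← hdec z' hz'] at this
    · have := hlip z hz z' hz'
      rwa [sub_sub_sub_cancel_right]
  have hfn : ∀ z ∈ A, ‖f z‖ = (‖z - p‖ ^ m * ‖h z‖)⁻¹ := fun z hz => by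
    rw [hf z hz, norm_inv, norm_mul, norm_pow]
  -- comparability of norms
  have rat1 : ∀ z ∈ A, ∀ z' ∈ A, ‖f z‖ ≤ 2 * ‖f z'‖ → ‖z' - p‖ ≤ 8 * ‖z - p‖ := by
    intro z hz z' hz' hr
    have hpz : 0 < ‖z - p‖ := norm_pos_iff.2 (hw0 z hz)
    have hpz' : 0 < ‖z' - p‖ := norm_pos_iff.2 (hw0 z' hz')
    have hph : 0 < ‖h z‖ := norm_pos_iff.2 (hh0 z hz)
    have hph' : 0 < ‖h z'‖ := norm_pos_iff.2 (hh0 z' hz')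
    rw [hfn z hz, hfn z' hz', ← div_eq_mul_inv, inv_eq_one_div,
      div_le_div_iff₀ (by positivity) (by positivity)] at hr
    have e1 : ‖z' - p‖ ^ m * (H / 2) ≤ ‖z' - p‖ ^ m * ‖h z'‖ := by
      gcongr; exact h1 z' hz'
    have e2 : ‖z - p‖ ^ m * ‖h z‖ ≤ ‖z - p‖ ^ m * (2 * H) := by
      gcongr; exact h2 z hz
    have e3 : ‖z' - p‖ ^ m * H ≤ (8 * ‖z - p‖ ^ m) * H := by linarith
    have e4 : ‖z' - p‖ ^ m ≤ 8 * ‖z - p‖ ^ m := le_of_mul_le_mul_right e3 hH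
    have e5 : (8 : ℝ) ≤ 8 ^ m := le_self_pow₀ (by norm_num) (by omega)
    refine le_of_pow_le_pow_left₀ (n := m) (by omega) (by positivity) ?_
    rw [mul_pow]
    refine e4.trans ?_
    gcongr
  have rat2 : ∀ z ∈ A, ∀ z' ∈ A, ‖z' - p‖ ≤ 2 * ‖z - p‖ → ‖f z‖ ≤ K * ‖f z'‖ := by
    intro z hz z' hz' hr
    have hpz : 0 < ‖z - p‖ := norm_pos_iff.2 (hw0 z hz)
    have hpz' : 0 < ‖z' - p‖ := norm_pos_iff.2 (hw0 z' hz')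
    have hph : 0 < ‖h z‖ := norm_pos_iff.2 (hh0 z hz)
    have hph' : 0 < ‖h z'‖ := norm_pos_iff.2 (hh0 z' hz')
    rw [hfn z hz, hfn z' hz', ← div_eq_mul_inv, inv_eq_one_div,
      div_le_div_iff₀ (by positivity) (by positivity)]
    have e0 : (2 : ℝ) ^ m ≤ 8 ^ m := by gcongr; norm_num
    have e6 : 4 * 2 ^ m ≤ K := by
      rw [hK]
      nlinarith
    calc 1 * (‖z' - p‖ ^ m * ‖h z'‖) ≤ 1 * ((2 * ‖z - p‖) ^ m * (2 * H)) := by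
          gcongr; exact h2 z' hz'
      _ = (4 * 2 ^ m) * (‖z - p‖ ^ m * (H / 2)) := by rw [mul_pow]; ring
      _ ≤ K * (‖z - p‖ ^ m * ‖h z‖) := by
          gcongr; exact h1 z hz
  constructor
  · refine colDim_transfer (fun z => z - p) f n A K (by linarith) hw0 hf0 ?_
    intro z hz z' hz' hr hr'
    have r1 := rat1 z hz z' hz' hr
    have r2 := rat1 z' hz' z hz hr'
    refine ⟨?_, main z hz z' hz' r2 r1⟩
    refine r2.trans ?_
    gcongr
    linarith
  · refine colDim_transfer f (fun z => z - p) n A K (by linarith) hf0 hw0 ?_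
    intro z hz z' hz' hr hr'
    have := main z hz z' hz' (hr.trans (by gcongr; norm_num)) (hr'.trans (by gcongr; norm_num))
    exact ⟨rat2 z hz z' hz' hr', this.2, this.1⟩

lemma nagataDim_congr {α β : Type*} [PseudoMetricSpace α] [PseudoMetricSpace β] {A : Set α}
    {B : Set β} (h : ∀ n, CovDim n A ↔ CovDim n B) : nagataDim A = nagataDim B := by
  unfold nagataDim nagataDimWith
  congr 1
  ext N
  exact exists_congr fun n => and_congr_right fun _ => h n

/-- **Statement 16.** Near a pole `p` of a meromorphic function `f`, there is a
neighborhood `U` of `p` such that `f` preserves the Nagata dimension of every subset of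
`U \ {p}`. -/
theorem meromorphic_preserves_nagataDim_near_pole (Ω : Set ℂ) (hΩo : IsOpen Ω)
    (hΩc : IsConnected Ω) (p : ℂ) (hp : p ∈ Ω) (f : ℂ → ℂ)
    (hf : DifferentiableOn ℂ f (Ω \ {p}))
    (hpole : ∃ n : ℕ, 1 ≤ n ∧ ∃ V : Set ℂ, IsOpen V ∧ p ∈ V ∧ V ⊆ Ω ∧
      ∃ h : ℂ → ℂ, DifferentiableOn ℂ h V ∧ (∀ z ∈ V, h z ≠ 0) ∧
        ∀ z ∈ V, z ≠ p → 1 / f z = (z - p) ^ n * h z) :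
    ∃ U : Set ℂ, IsOpen U ∧ p ∈ U ∧ U ⊆ Ω ∧
      ∀ A : Set ℂ, A ⊆ U \ {p} → nagataDim A = nagataDim (f '' A) := by
  obtain ⟨m, hm, V, hVo, hpV, hVΩ, h, hh, hh0, hfh⟩ := hpole
  have han : AnalyticAt ℂ h p := hh.analyticAt (hVo.mem_nhds hpV)
  obtain ⟨L, t, ht, hLip⟩ := (han.contDiffAt (n := 1)).exists_lipschitzOnWith
  have hH : 0 < ‖h p‖ := norm_pos_iff.2 (hh0 p hpV)
  have hclose : ∀ᶠ z in nhds p, ‖h z - h p‖ < ‖h p‖ / 2 := by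
    have := Metric.tendsto_nhds.1 han.continuousAt.tendsto (‖h p‖ / 2) (by positivity)
    simpa [dist_eq_norm] using this
  obtain ⟨δ₀, hδ₀, hball⟩ := Metric.mem_nhds_iff.1
    (Filter.inter_mem (Filter.inter_mem (hVo.mem_nhds hpV) ht) hclose)
  set δ := min δ₀ (‖h p‖ / 8 / (L + 1)) with hδ
  have hδpos : 0 < δ := lt_min hδ₀ (by positivity)
  have hsub : ball p δ ⊆ ball p δ₀ := ball_subset_ball (min_le_left _ _)
  refine ⟨ball p δ, isOpen_ball, mem_ball_self hδpos,
    fun z hz => hVΩ (hball (hsub hz)).1.1, fun A hA => nagataDim_congr fun n => ?_⟩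
  have key : ColDim (id : ℂ → ℂ) n A ↔ ColDim f n A := by
    have e1 : ∀ A : Set ℂ, ColDim (id : ℂ → ℂ) n A ↔ ColDim (fun z => z - p) n A := by
      intro A
      have e : ∀ (χ : ℂ → Fin (n + 1)) (s : ℝ),
          ChainStep (id : ℂ → ℂ) A χ s = ChainStep (fun z => z - p) A χ s := by
        intro χ s
        funext a b
        simp only [ChainStep, dist_sub_right, id]
      simp only [ColDim, dist_sub_right, id, e]
    rw [e1]
    set ε : ℝ := 1 / (2 * m) with hε
    have hm0 : (0 : ℝ) < m := by exact_mod_cast hm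
    have hεpos : 0 < ε := by positivity
    have hmε : m * ε ≤ 1 / 2 := by rw [hε]; field_simp; rfl
    obtain ⟨T, hTs, hTf, hTc⟩ := (isCompact_sphere (0 : ℂ) 1).finite_cover_balls hεpos
    let W : ℂ → Set ℂ := fun u => {z ∈ A | ‖(z - p) / (‖z - p‖ : ℂ) - u‖ ≤ ε}
    have hcov : A ⊆ ⋃ u ∈ T, W u := by
      intro z hz
      have hzp : z - p ≠ 0 := sub_ne_zero.2 (hA hz).2
      have hmem : (z - p) / (‖z - p‖ : ℂ) ∈ sphere (0 : ℂ) 1 := by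
        rw [mem_sphere_zero_iff_norm, norm_div, Complex.norm_real, norm_norm,
          div_self (norm_pos_iff.2 hzp).ne']
      obtain ⟨u, hu, hzu⟩ := mem_iUnion₂.1 (hTc hmem)
      refine mem_iUnion₂.2 ⟨u, hu, hz, ?_⟩
      rw [mem_ball, dist_eq_norm] at hzu
      exact hzu.le
    have hsec : ∀ u ∈ T, (ColDim (fun z => z - p) n (W u) ↔ ColDim f n (W u)) := by
      intro u hu
      have hWA : ∀ z ∈ W u, z ∈ ball p δ ∧ z ≠ p := fun z hz => hA hz.1
      have hW0 : ∀ z ∈ W u, z ∈ (V ∩ t) ∩ {z | ‖h z - h p‖ < ‖h p‖ / 2} :=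
        fun z hz => hball (hsub (hWA z hz).1)
      refine sector_iff m hm ‖h p‖ L ε L.2 hH hεpos.le hmε p u
        (mem_sphere_zero_iff_norm.1 (hTs hu)) f h (W u) (fun z hz => (hWA z hz).2)
        (fun z hz => hz.2) ?_ ?_ ?_ ?_ ?_ n
      · intro z hz
        have h1 : ‖h z - h p‖ < ‖h p‖ / 2 := (hW0 z hz).2
        have h2 := norm_sub_norm_le (h p) (h z)
        rw [norm_sub_rev] at h2
        linarith
      · intro z hz
        have h1 : ‖h z - h p‖ < ‖h p‖ / 2 := (hW0 z hz).2
        have h2 := norm_sub_norm_le (h z) (h p)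
        linarith
      · intro z hz z' hz'
        have := hLip.dist_le_mul z (hW0 z hz).1.2 z' (hW0 z' hz').1.2
        simpa [dist_eq_norm] using this
      · intro z hz
        have h1 := (hWA z hz).1
        rw [mem_ball, dist_eq_norm] at h1
        have h2 : ‖z - p‖ ≤ ‖h p‖ / 8 / (L + 1) := h1.le.trans (min_le_right _ _)
        rw [le_div_iff₀ (by positivity)] at h2
        nlinarith [norm_nonneg (z - p)]
      · intro z hz
        have := hfh z (hW0 z hz).1.1 (hWA z hz).2
        rw [← this, one_div, inv_inv]
    constructor
    · intro hq
      exact (colDim_biUnion f n hTf W fun u hu =>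
        (hsec u hu).1 (hq.mono fun z hz => hz.1)).mono hcov
    · intro hq
      exact (colDim_biUnion _ n hTf W fun u hu =>
        (hsec u hu).2 (hq.mono fun z hz => hz.1)).mono hcov
  constructor
  · intro hc
    exact covDim_of_colDim ((colDim_image f n A).2 (key.1 (colDim_of_covDim hc)))
  · intro hc
    exact covDim_of_colDim (key.2 ((colDim_image f n A).1 (colDim_of_covDim hc)))
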